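/- For each integer n ≥ 1, the Thue-Morse sequence has a nonempty factor whose least period is exactly n. -/

import Mathlib

/-- `n` is a period of the factor `x[i..j]` of the infinite word `x`:
`x t = x (t+n)` for all `i ≤ t ≤ j - n`. -/
def Period {A : Type*} (x : ℕ → A) (i j n : ℕ) : Prop :=
  ∀ t, i ≤ t → t + n ≤ j → x t = x (t + n)

/-- `n` is a least period of `x`: some nonempty factor `x[i..j]` has
minimal period `n`. -/
def LeastPeriod {A : Type*} (x : ℕ → A) (n : ℕ) : Prop :=
  ∃ i j, i ≤ j ∧ Period x i j n ∧ ∀ m, 0 < m → m < n → ¬ Period x i j m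

/-- The Thue-Morse sequence: sum of binary digits of `n`, mod 2. -/
def thueMorse (n : ℕ) : ℕ := (Nat.digits 2 n).sum % 2

def T (n : ℕ) : Bool := decide (thueMorse n = 1)

theorem tm_lt (n : ℕ) : thueMorse n < 2 := Nat.mod_lt _ (by norm_num)

theorem T_eq_iff (a b : ℕ) : T a = T b ↔ thueMorse a = thueMorse b := by
  have ha := tm_lt a
  have hb := tm_lt b
  unfold T
  rw [decide_eq_decide]
  omega

theorem T_even (n : ℕ) : T (2 * n) = T n := by
  rw [T_eq_iff]
  unfold thueMorse
  rcases Nat.eq_zero_or_pos n with h | h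
  · subst h; rfl
  · rw [Nat.digits_def' (by norm_num) (by omega : 0 < 2 * n)]
    simp

theorem T_odd (n : ℕ) : T (2 * n + 1) = !T n := by
  have key : thueMorse (2 * n + 1) = (1 + (Nat.digits 2 n).sum) % 2 := by
    unfold thueMorse
    rw [Nat.digits_def' (by norm_num) (by omega : 0 < 2 * n + 1)]
    have h1 : (2 * n + 1) % 2 = 1 := by omega
    have h2 : (2 * n + 1) / 2 = n := by omega
    rw [h1, h2, List.sum_cons]
  unfold T
  rw [key, ← decide_not, decide_eq_decide]
  unfold thueMorse
  omega

theorem T_cube (w : ℕ) (h1 : T w = T (w + 1)) (h2 : T (w + 1) = T (w + 2)) : False := by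
  rcases Nat.even_or_odd' w with ⟨v, hv | hv⟩
  · subst hv
    rw [T_even, T_odd] at h1
    revert h1; cases T v <;> simp
  · subst hv
    rw [show 2 * v + 1 + 1 = 2 * (v + 1) by ring, show 2 * v + 1 + 2 = 2 * (v + 1) + 1 by ring,
      T_even, T_odd] at h2
    revert h2; cases T (v + 1) <;> simp

theorem even_odd (u w : ℕ) (h0 : T (2 * u) = T (2 * w + 1))
    (h1 : T (2 * u + 1) = T (2 * w + 2)) (h2 : T (2 * u + 2) = T (2 * w + 3))
    (h3 : T (2 * u + 3) = T (2 * w + 4)) : False := by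
  rw [T_even, T_odd] at h0
  rw [show 2 * w + 2 = 2 * (w + 1) by ring, T_even, T_odd] at h1
  rw [show 2 * u + 2 = 2 * (u + 1) by ring, show 2 * w + 3 = 2 * (w + 1) + 1 by ring,
    T_even, T_odd] at h2
  rw [show 2 * u + 3 = 2 * (u + 1) + 1 by ring, show 2 * w + 4 = 2 * (w + 2) by ring,
    T_even, T_odd] at h3
  apply T_cube w
  · rw [← h1, h0]; simp
  · rw [← h3, h2]; simp

theorem odd_per (a m : ℕ) (hm : m % 2 = 1) (h : ∀ d, d < 4 → T (a + d) = T (a + d + m)) :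
    False := by
  have h0 := h 0 (by norm_num)
  have h1 := h 1 (by norm_num)
  have h2 := h 2 (by norm_num)
  have h3 := h 3 (by norm_num)
  obtain ⟨v, rfl⟩ : ∃ v, m = 2 * v + 1 := ⟨m / 2, by omega⟩
  rcases Nat.even_or_odd' a with ⟨u, hu | hu⟩
  · subst hu
    apply even_odd u (u + v)
    · convert h0 using 2 <;> ring
    · convert h1 using 2 <;> ring
    · convert h2 using 2 <;> ring
    · convert h3 using 2 <;> ring
  · subst hu
    apply even_odd (u + v + 1) u
    · convert h0.symm using 2 <;> ring
    · convert h1.symm using 2 <;> ring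
    · convert h2.symm using 2 <;> ring
    · convert h3.symm using 2 <;> ring

/-- the factor of length `l` at `i` has no period below `b` -/
def NP (i l b : ℕ) : Prop :=
  ∀ m, 0 < m → m < b → ∃ s, i ≤ s ∧ s + m < i + l ∧ T s ≠ T (s + m)

theorem NP_step {i' l' b' : ℕ} (h : NP i' l' b') {i l b α β : ℕ} (hα : α ≤ 1) (hβ : β ≤ 1)
    (hi : i = 2 * i' + α) (hl : l + α + β = 2 * l') (hb : b ≤ 2 * b') (hbl : b ≤ l)
    (hloc : ∀ m, 0 < m → m < b → m % 2 = 1 → l ≤ m + 3 →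
      ∃ s, i ≤ s ∧ s + m < i + l ∧ T s ≠ T (s + m)) : NP i l b := by
  intro m hm0 hmb
  rcases Nat.even_or_odd' m with ⟨v, hv | hv⟩
  · obtain ⟨s, h1, h2, h3⟩ := h v (by omega) (by omega)
    by_cases hs : i ≤ 2 * s
    · refine ⟨2 * s, hs, by omega, ?_⟩
      rw [hv, ← mul_add, T_even, T_even]; exact h3
    · refine ⟨2 * s + 1, by omega, by omega, ?_⟩
      rw [hv, show 2 * s + 1 + 2 * v = 2 * (s + v) + 1 by ring, T_odd, T_odd]
      simpa using h3
  · by_cases hlm : l ≤ m + 3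
    · exact hloc m hm0 hmb (by omega) hlm
    · by_contra hcon
      push Not at hcon
      exact odd_per i m (by omega) (fun d hd => hcon (i + d) (by omega) (by omega))

def St (e : ℕ) (p q : Bool × Bool × Bool) (b : ℕ) : Prop :=
  ∃ (i k : ℕ) (c : Bool), k + 3 = i + b + e ∧ NP i (b + e) b ∧
    T i = xor p.1 c ∧ T (i + 1) = xor p.2.1 c ∧ T (i + 2) = xor p.2.2 c ∧
    T k = xor q.1 c ∧ T (k + 1) = xor q.2.1 c ∧ T (k + 2) = xor q.2.2 c

theorem St.base {e : ℕ} {p q : Bool × Bool × Bool} {b : ℕ} (i k : ℕ) (c : Bool)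
    (h1 : k + 3 = i + b + e)
    (h2 : ∀ m < b, 0 < m → ∃ s < b + e - m, T (i + s) ≠ T (i + s + m))
    (h3 : T i = xor p.1 c ∧ T (i + 1) = xor p.2.1 c ∧ T (i + 2) = xor p.2.2 c ∧
    T k = xor q.1 c ∧ T (k + 1) = xor q.2.1 c ∧ T (k + 2) = xor q.2.2 c) : St e p q b := by
  refine ⟨i, k, c, h1, ?_, h3⟩
  intro m hm0 hmb
  obtain ⟨s, hs, hs'⟩ := h2 m hmb hm0
  exact ⟨i + s, by omega, by omega, hs'⟩

def preW (α : Bool) (p : Bool × Bool × Bool) : Bool × Bool × Bool :=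
  if α then (!p.1, p.2.1, !p.2.1) else (p.1, !p.1, p.2.1)

def sufW (β : Bool) (q : Bool × Bool × Bool) : Bool × Bool × Bool :=
  if β then (q.2.1, !q.2.1, q.2.2) else (!q.2.1, q.2.2, !q.2.2)

def flipW (d : Bool) (q : Bool × Bool × Bool) : Bool × Bool × Bool :=
  (xor q.1 d, xor q.2.1 d, xor q.2.2 d)

def Loc (α β : Bool) (e : ℕ) (P Q : Bool × Bool × Bool) : Prop :=
  (e < 1 → (α = β) → P.1 ≠ Q.2.2) ∧
  (e < 2 → (α ≠ β) → (P.1 ≠ Q.2.1 ∨ P.2.1 ≠ Q.2.2)) ∧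
  (e < 3 → (α = β) → (P.1 ≠ Q.1 ∨ P.2.1 ≠ Q.2.1 ∨ P.2.2 ≠ Q.2.2))

instance (α β : Bool) (e : ℕ) (P Q : Bool × Bool × Bool) : Decidable (Loc α β e P Q) := by
  unfold Loc; infer_instance

theorem St.step {e : ℕ} {p q : Bool × Bool × Bool} {b' : ℕ} (h : St e p q b')
    (α β γ d : Bool) {e2 : ℕ} {P Q : Bool × Bool × Bool}
    (hc : e2 + α.toNat + β.toNat = 2 * e + γ.toNat ∧ flipW d (preW α p) = P ∧
      flipW d (sufW β q) = Q ∧ Loc α β e2 P Q) {b : ℕ} (hb : b + γ.toNat = 2 * b') :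
    St e2 P Q b := by
  obtain ⟨i, k, c, hk, hN, t0, t1, t2, s0, s1, s2⟩ := h
  obtain ⟨he, hP, hQ, hL⟩ := hc
  have hα := Bool.toNat_le α
  have hβ := Bool.toNat_le β
  have P0 : T (2 * i + α.toNat) = xor P.1 (xor c d) := by
    subst hP
    cases α <;> simp [preW, flipW, T_even, T_odd, t0] <;> cases p.1 <;> cases c <;> cases d <;> rfl
  have P1 : T (2 * i + α.toNat + 1) = xor P.2.1 (xor c d) := by
    subst hP
    cases α
    · simp [preW, flipW, T_odd, t0]; cases p.1 <;> cases c <;> cases d <;> rfl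
    · simp only [Bool.toNat_true]
      rw [show 2 * i + 1 + 1 = 2 * (i + 1) by ring, T_even, t1]
      simp [preW, flipW]; cases p.2.1 <;> cases c <;> cases d <;> rfl
  have P2 : T (2 * i + α.toNat + 2) = xor P.2.2 (xor c d) := by
    subst hP
    cases α
    · simp only [Bool.toNat_false]
      rw [show 2 * i + 0 + 2 = 2 * (i + 1) by ring, T_even, t1]
      simp [preW, flipW]; cases p.2.1 <;> cases c <;> cases d <;> rfl
    · simp only [Bool.toNat_true]
      rw [show 2 * i + 1 + 2 = 2 * (i + 1) + 1 by ring, T_odd, t1]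
      simp [preW, flipW]; cases p.2.1 <;> cases c <;> cases d <;> rfl
  obtain ⟨k2, hk2⟩ : ∃ k2, k2 + β.toNat = 2 * k + 3 := ⟨2 * k + 3 - β.toNat, by omega⟩
  have Q012 : T k2 = xor Q.1 (xor c d) ∧ T (k2 + 1) = xor Q.2.1 (xor c d) ∧
      T (k2 + 2) = xor Q.2.2 (xor c d) := by
    subst hQ
    cases β
    · simp only [Bool.toNat_false] at hk2
      obtain rfl : k2 = 2 * (k + 1) + 1 := by omega
      rw [show 2 * (k + 1) + 1 + 1 = 2 * (k + 2) by ring,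
        show 2 * (k + 1) + 1 + 2 = 2 * (k + 2) + 1 by ring, T_even, T_odd, T_odd, s1, s2]
      simp only [sufW, flipW]
      cases q.2.1 <;> cases q.2.2 <;> cases c <;> cases d <;> decide
    · simp only [Bool.toNat_true] at hk2
      obtain rfl : k2 = 2 * (k + 1) := by omega
      rw [show 2 * (k + 1) + 2 = 2 * (k + 2) by ring, T_even, T_odd, T_even, s1, s2]
      simp only [sufW, flipW]
      cases q.2.1 <;> cases q.2.2 <;> cases c <;> cases d <;> decide
  obtain ⟨Q0, Q1, Q2⟩ := Q012
  have hk3 : k2 + 3 = 2 * i + α.toNat + b + e2 := by omega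
  refine ⟨2 * i + α.toNat, k2, xor c d, hk3, ?_, P0, P1, P2, Q0, Q1, Q2⟩
  refine NP_step hN hα hβ rfl (by omega) (by omega) (by omega) ?_
  clear hP hQ t0 t1 t2 s0 s1 s2
  obtain ⟨L1, L2, L3⟩ := hL
  have xinj : ∀ x y z : Bool, x ≠ y → xor x z ≠ xor y z := by decide
  have par0 : (α.toNat + β.toNat) % 2 = 0 → α = β := by
    cases α <;> cases β <;> simp
  have par1 : (α.toNat + β.toNat) % 2 = 1 → α ≠ β := by
    cases α <;> cases β <;> simp
  intro m hm0 hmb hmo hml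
  generalize hI : 2 * i + α.toNat = I at *
  have hcase : b + e2 = m + 1 ∨ b + e2 = m + 2 ∨ b + e2 = m + 3 := by omega
  rcases hcase with ho | ho | ho
  · have hx := L1 (by omega) (par0 (by omega))
    refine ⟨I, le_rfl, by omega, ?_⟩
    rw [show I + m = k2 + 2 by omega, P0, Q2]
    exact xinj _ _ _ hx
  · rcases L2 (by omega) (par1 (by omega)) with hx | hx
    · refine ⟨I, le_rfl, by omega, ?_⟩
      rw [show I + m = k2 + 1 by omega, P0, Q1]
      exact xinj _ _ _ hx
    · refine ⟨I + 1, by omega, by omega, ?_⟩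
      rw [show I + 1 + m = k2 + 2 by omega, P1, Q2]
      exact xinj _ _ _ hx
  · rcases L3 (by omega) (par0 (by omega)) with hx | hx | hx
    · refine ⟨I, le_rfl, by omega, ?_⟩
      rw [show I + m = k2 by omega, P0, Q0]
      exact xinj _ _ _ hx
    · refine ⟨I + 1, by omega, by omega, ?_⟩
      rw [show I + 1 + m = k2 + 1 by omega, P1, Q1]
      exact xinj _ _ _ hx
    · refine ⟨I + 2, by omega, by omega, ?_⟩
      rw [show I + 2 + m = k2 + 2 by omega, P2, Q2]
      exact xinj _ _ _ hx

theorem fin_of_NP {i b e : ℕ} (hb : 0 < b) (hN : NP i (b + e) b)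
    (hper : ∀ s, i ≤ s → s < i + e → T s = T (s + b)) : LeastPeriod thueMorse b := by
  refine ⟨i, i + b + e - 1, by omega, ?_, ?_⟩
  · intro t h1 h2
    exact (T_eq_iff _ _).1 (hper t h1 (by omega))
  · intro m h0 hm hP
    obtain ⟨s, h1, h2, h3⟩ := hN m h0 hm
    exact h3 ((T_eq_iff _ _).2 (hP s h1 (by omega)))

theorem St.fin0 {p q : Bool × Bool × Bool} {b : ℕ} (h : St 0 p q b) (hb : 0 < b) :
    LeastPeriod thueMorse b := by
  obtain ⟨i, k, c, hk, hN, -⟩ := h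
  exact fin_of_NP hb hN (fun s h1 h2 => by omega)

theorem St.fin1 {p q : Bool × Bool × Bool} {b : ℕ} (h : St 1 p q b) (hb : 0 < b)
    (hpq : p.1 = q.2.2) : LeastPeriod thueMorse b := by
  obtain ⟨i, k, c, hk, hN, t0, -, -, -, -, s2⟩ := h
  refine fin_of_NP hb hN (fun s h1 h2 => ?_)
  obtain rfl : s = i := by omega
  rw [show s + b = k + 2 by omega, t0, s2, hpq]

def NA (b : ℕ) : Prop :=
  St 0 (false, false, true) (true, false, true) b ∧
  St 1 (false, false, true) (false, true, false) b ∧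
  St 1 (false, true, false) (true, false, false) b

def NB (b : ℕ) : Prop :=
  St 0 (false, true, false) (false, true, true) b ∧
  St 1 (false, false, true) (true, false, true) b ∧
  St 1 (false, true, false) (false, true, true) b ∧
  St 1 (false, true, false) (true, true, false) b

def NC (b : ℕ) : Prop :=
  St 1 (false, false, true) (true, false, true) b ∧
  St 1 (false, false, true) (true, true, false) b ∧
  St 1 (false, true, false) (false, true, true) b ∧
  St 1 (false, true, true) (true, false, false) b

def ND (b : ℕ) : Prop :=
  St 1 (false, false, true) (false, true, false) b ∧
  St 1 (false, false, true) (true, false, true) b ∧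
  St 1 (false, true, false) (false, true, true) b ∧
  St 1 (false, true, false) (true, false, false) b

theorem NA_0 {b' b : ℕ} (h : NA b') (hb : b + false.toNat = 2 * b') : NA b := by
  obtain ⟨h0, h1, h2⟩ := h
  exact ⟨h2.step true true false true (by decide) hb,
    h2.step true false false true (by decide) hb,
    h1.step false true false false (by decide) hb⟩

theorem NA_1 {b' b : ℕ} (h : NA b') (hb : b + true.toNat = 2 * b') : NB b := by
  obtain ⟨h0, h1, h2⟩ := h
  exact ⟨h0.step false true true false (by decide) hb,
    h2.step true true true true (by decide) hb,
    h1.step true true true true (by decide) hb,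
    h0.step false false true false (by decide) hb⟩

theorem NB_0 {b' b : ℕ} (h : NB b') (hb : b + false.toNat = 2 * b') : NC b := by
  obtain ⟨h0, h1, h2, h3⟩ := h
  exact ⟨h2.step true false false true (by decide) hb,
    h3.step true false false true (by decide) hb,
    h1.step false true false false (by decide) hb,
    h3.step false true false false (by decide) hb⟩

theorem NB_1 {b' b : ℕ} (h : NB b') (hb : b + true.toNat = 2 * b') : NA b := by
  obtain ⟨h0, h1, h2, h3⟩ := h
  exact ⟨h0.step true false true true (by decide) hb,
    h2.step true true true true (by decide) hb,
    h1.step true true true true (by decide) hb⟩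

theorem NC_0 {b' b : ℕ} (h : NC b') (hb : b + false.toNat = 2 * b') : ND b := by
  obtain ⟨h0, h1, h2, h3⟩ := h
  exact ⟨h3.step true false false true (by decide) hb,
    h2.step true false false true (by decide) hb,
    h0.step false true false false (by decide) hb,
    h1.step false true false false (by decide) hb⟩

theorem NC_1 {b' b : ℕ} (h : NC b') (hb : b + true.toNat = 2 * b') : ND b := by
  obtain ⟨h0, h1, h2, h3⟩ := h
  exact ⟨h2.step true true true true (by decide) hb,
    h3.step true true true true (by decide) hb,
    h1.step true true true true (by decide) hb,
    h0.step true true true true (by decide) hb⟩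

theorem ND_0 {b' b : ℕ} (h : ND b') (hb : b + false.toNat = 2 * b') : ND b := by
  obtain ⟨h0, h1, h2, h3⟩ := h
  exact ⟨h3.step true false false true (by decide) hb,
    h2.step true false false true (by decide) hb,
    h1.step false true false false (by decide) hb,
    h0.step false true false false (by decide) hb⟩

theorem ND_1 {b' b : ℕ} (h : ND b') (hb : b + true.toNat = 2 * b') : ND b := by
  obtain ⟨h0, h1, h2, h3⟩ := h
  exact ⟨h2.step true true true true (by decide) hb,
    h3.step true true true true (by decide) hb,
    h0.step true true true true (by decide) hb,
    h1.step true true true true (by decide) hb⟩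

theorem NC_base : NC 4 :=
  ⟨St.base 1 3 true (by decide) (by decide) (by decide),
    St.base 5 7 false (by decide) (by decide) (by decide),
    St.base 2 4 true (by decide) (by decide) (by decide),
    St.base 4 6 true (by decide) (by decide) (by decide)⟩

theorem NB_base : NB 5 :=
  ⟨St.base 2 4 true (by decide) (by decide) (by decide),
    St.base 7 10 true (by decide) (by decide) (by decide),
    St.base 3 6 false (by decide) (by decide) (by decide),
    St.base 2 5 true (by decide) (by decide) (by decide)⟩

theorem NA_base : NA 6 :=
  ⟨St.base 7 10 true (by decide) (by decide) (by decide),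
    St.base 7 11 true (by decide) (by decide) (by decide),
    St.base 2 6 true (by decide) (by decide) (by decide)⟩

theorem nodes (b : ℕ) (hb : 4 ≤ b) : NA b ∨ NB b ∨ NC b ∨ ND b := by
  induction b using Nat.strong_induction_on with
  | _ b ih =>
    by_cases h7 : b < 7
    · obtain rfl | rfl | rfl : b = 4 ∨ b = 5 ∨ b = 6 := by omega
      · exact Or.inr (Or.inr (Or.inl NC_base))
      · exact Or.inr (Or.inl NB_base)
      · exact Or.inl NA_base
    · rcases Nat.even_or_odd' b with ⟨v, hv | hv⟩
      · have h0 : b + false.toNat = 2 * v := by simpa using hv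
        rcases ih v (by omega) (by omega) with h | h | h | h
        · exact Or.inl (NA_0 h h0)
        · exact Or.inr (Or.inr (Or.inl (NB_0 h h0)))
        · exact Or.inr (Or.inr (Or.inr (NC_0 h h0)))
        · exact Or.inr (Or.inr (Or.inr (ND_0 h h0)))
      · have h0 : b + true.toNat = 2 * (v + 1) := by simp; omega
        rcases ih (v + 1) (by omega) (by omega) with h | h | h | h
        · exact Or.inr (Or.inl (NA_1 h h0))
        · exact Or.inl (NB_1 h h0)
        · exact Or.inr (Or.inr (Or.inr (NC_1 h h0)))
        · exact Or.inr (Or.inr (Or.inr (ND_1 h h0)))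

theorem small_NP {b : ℕ} (i : ℕ) (hb : 0 < b)
    (h2 : ∀ m < b, 0 < m → ∃ s < b - m, T (i + s) ≠ T (i + s + m)) :
    LeastPeriod thueMorse b := by
  refine fin_of_NP (i := i) (e := 0) hb ?_ (fun s h1 h2 => by omega)
  intro m hm0 hmb
  obtain ⟨s, hs, hs'⟩ := h2 m hmb hm0
  exact ⟨i + s, by omega, by omega, hs'⟩

theorem thueMorse_leastPeriod (n : ℕ) (hn : 1 ≤ n) :
    LeastPeriod thueMorse n := by
  by_cases h4 : n < 4
  · obtain rfl | rfl | rfl : n = 1 ∨ n = 2 ∨ n = 3 := by omega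
    · exact small_NP 0 (by norm_num) (by decide)
    · exact small_NP 0 (by norm_num) (by decide)
    · exact small_NP 0 (by norm_num) (by decide)
  · have hpos : 0 < n := hn
    rcases nodes n (by omega) with h | h | h | h
    · exact h.1.fin0 hpos
    · exact h.1.fin0 hpos
    · exact h.2.1.fin1 hpos rfl
    · exact h.1.fin1 hpos rfl
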